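/- Under the stability condition ρ(1 + β₁γ_{1,1}) < 1, the steady-state server failure frequency satisfies P_f = lim_{z→1⁻} (β₁P̃₁(z) + β₂P̃₂(z)) = ρβ₁ + σβ₂(1 − ρ(1 + β₁γ_{1,1}))/(1 + σ(1 + β₂γ_{2,1})), where ρ = λμ_{1,1} and σ = αμ_{2,1}. -/

import Mathlib

open MeasureTheory

/-- Laplace transform of a (Borel) measure on `ℝ`. -/
noncomputable def lapl (μ : Measure ℝ) (θ : ℝ) : ℝ :=
  ∫ x, Real.exp (-θ * x) ∂μ

/-!
Everything is governed by first-order behaviour as `z → 1⁻`. Dominated convergence gives the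
Laplace transform of a distribution on `[0, ∞)` with finite mean `m` the right derivative `-m` at
`0`, so by the chain rule `hᵢ` and `δᵢ` have left derivatives `-λ(1 + βᵢγ_{i,1})` and
`λμ_{i,1}(1 + βᵢγ_{i,1})` at `1`, where `hᵢ = 0` and `δᵢ = 1`. Each quotient of functions vanishing
at `1` then tends to the quotient of the left derivatives. In particular the integrand in the
exponent of `φ` stays bounded near `1`, so `φ(z) → 1`; the inbound and outgoing busy
probabilities come out as `ρ` and `σ(1 - ρ(1 + β₁γ_{1,1}))/D`.
-/

open Set Filter Topology

section Quotients

lemma tendsto_div_of_hasDerivWithinAt {𝕜 : Type*} [NontriviallyNormedField 𝕜] {f g : 𝕜 → 𝕜}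
    {f' g' a : 𝕜} {s : Set 𝕜} (hf : HasDerivWithinAt f f' s a) (hg : HasDerivWithinAt g g' s a)
    (hfa : f a = 0) (hga : g a = 0) (hg' : g' ≠ 0) :
    Tendsto (fun x => f x / g x) (𝓝[s \ {a}] a) (𝓝 (f' / g')) := by
  rw [hasDerivWithinAt_iff_tendsto_slope] at hf hg
  refine (hf.div hg hg').congr' ?_
  filter_upwards [self_mem_nhdsWithin] with x hx
  have hxa : (x - a)⁻¹ ≠ 0 := inv_ne_zero (sub_ne_zero.2 hx.2)
  simp only [Pi.div_apply, slope_def_module, hfa, hga, sub_zero, smul_eq_mul,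
    mul_div_mul_left _ _ hxa]

lemma tendsto_div_nhdsLT_of_hasDerivWithinAt {f g : ℝ → ℝ} {f' g' b : ℝ}
    (hf : HasDerivWithinAt f f' (Iio b) b) (hg : HasDerivWithinAt g g' (Iio b) b)
    (hfb : f b = 0) (hgb : g b = 0) (hg' : g' ≠ 0) :
    Tendsto (fun x => f x / g x) (𝓝[<] b) (𝓝 (f' / g')) := by
  simpa using tendsto_div_of_hasDerivWithinAt hf hg hfb hgb hg'

lemma tendsto_intervalIntegral_nhdsLT_zero {E : Type*} [NormedAddCommGroup E] [NormedSpace ℝ E]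
    {f : ℝ → E} {b : ℝ} (hf : (𝓝[<] b).IsBoundedUnder (· ≤ ·) fun x => ‖f x‖) :
    Tendsto (fun a => ∫ x in a..b, f x) (𝓝[<] b) (𝓝 0) := by
  obtain ⟨C, hC⟩ := hf
  obtain ⟨l, hlb, hl⟩ := mem_nhdsLT_iff_exists_Ioo_subset.1 (eventually_map.1 hC)
  have hlim : Tendsto (fun a => C * |b - a|) (𝓝[<] b) (𝓝 0) := by
    have hcont : Continuous fun a => C * |b - a| := by fun_prop
    simpa using (hcont.tendsto b).mono_left nhdsWithin_le_nhds
  refine squeeze_zero_norm' ?_ hlim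
  filter_upwards [Ioo_mem_nhdsLT hlb] with a ha
  refine intervalIntegral.norm_integral_le_of_norm_le_const_ae ?_
  filter_upwards [Measure.ae_ne volume b] with x hxb hx
  rw [uIoc_of_le ha.2.le] at hx
  exact hl ⟨ha.1.trans hx.1, hx.2.lt_of_ne hxb⟩

lemma tendsto_exp_neg_integral_div_nhdsLT_one {f g : ℝ → ℝ} {f' g' b : ℝ}
    (hf : HasDerivWithinAt f f' (Iio b) b) (hg : HasDerivWithinAt g g' (Iio b) b)
    (hfb : f b = 0) (hgb : g b = 0) (hg' : g' ≠ 0) :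
    Tendsto (fun a => Real.exp (-∫ x in a..b, f x / g x)) (𝓝[<] b) (𝓝 1) := by
  have hquot := tendsto_div_nhdsLT_of_hasDerivWithinAt hf hg hfb hgb hg'
  have hint := tendsto_intervalIntegral_nhdsLT_zero hquot.norm.isBoundedUnder_le
  simpa using hint.neg.rexp

end Quotients

section LaplaceTransform

variable {μ : Measure ℝ}

lemma ae_nonneg_of_measure_Iio_zero (hμ : μ (Iio 0) = 0) : ∀ᵐ x ∂μ, 0 ≤ x := by
  simpa only [ae_iff, not_le, Iio] using hμ

lemma integral_nonneg_of_measure_Iio_zero (hμ : μ (Iio 0) = 0) : 0 ≤ ∫ x, x ∂μ :=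
  integral_nonneg_of_ae (ae_nonneg_of_measure_Iio_zero hμ)

lemma lapl_zero [IsProbabilityMeasure μ] : lapl μ 0 = 1 := by
  simp [lapl]

lemma exp_neg_mul_le_one {θ x : ℝ} (hθ : 0 ≤ θ) (hx : 0 ≤ x) : Real.exp (-θ * x) ≤ 1 :=
  Real.exp_le_one_iff.2 (mul_nonpos_of_nonpos_of_nonneg (neg_nonpos.2 hθ) hx)

lemma integrable_exp_neg_mul [IsFiniteMeasure μ] (hμ : μ (Iio 0) = 0) {θ : ℝ} (hθ : 0 ≤ θ) :
    Integrable (fun x => Real.exp (-θ * x)) μ := by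
  refine .of_bound (by fun_prop) 1 ?_
  filter_upwards [ae_nonneg_of_measure_Iio_zero hμ] with x hx
  rw [Real.norm_eq_abs, Real.abs_exp]
  exact exp_neg_mul_le_one hθ hx

lemma lapl_le_one [IsProbabilityMeasure μ] (hμ : μ (Iio 0) = 0) {θ : ℝ} (hθ : 0 ≤ θ) :
    lapl μ θ ≤ 1 :=
  calc lapl μ θ ≤ ∫ _, (1 : ℝ) ∂μ :=
        integral_mono_ae (integrable_exp_neg_mul hμ hθ) (integrable_const 1)
          ((ae_nonneg_of_measure_Iio_zero hμ).mono fun _ => exp_neg_mul_le_one hθ)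
    _ = 1 := by simp

lemma abs_slope_exp_neg_mul_le {θ x : ℝ} (hθ : 0 < θ) (hx : 0 ≤ x) :
    |slope (fun t => Real.exp (-t * x)) 0 θ| ≤ x := by
  have hexp_le := exp_neg_mul_le_one hθ.le hx
  have hle_exp := Real.add_one_le_exp (-θ * x)
  simp only [slope_def_field, neg_zero, zero_mul, Real.exp_zero, sub_zero]
  rw [abs_div, abs_of_pos hθ, div_le_iff₀ hθ, abs_le]
  constructor <;> nlinarith

lemma hasDerivWithinAt_lapl_zero [IsFiniteMeasure μ] (hμ : μ (Iio 0) = 0)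
    (hint : Integrable (fun x => x) μ) :
    HasDerivWithinAt (lapl μ) (-∫ x, x ∂μ) (Ici 0) 0 := by
  rw [← hasDerivWithinAt_Ioi_iff_Ici, hasDerivWithinAt_iff_tendsto_slope' self_notMem_Ioi,
    ← integral_neg]
  have hslope : Tendsto (fun θ => ∫ x, slope (fun t => Real.exp (-t * x)) 0 θ ∂μ) (𝓝[>] 0)
      (𝓝 (∫ x, -x ∂μ)) := by
    refine tendsto_integral_filter_of_dominated_convergence (fun x => x) ?_ ?_ hint ?_
    · simp only [slope_def_field]
      exact .of_forall fun θ => Measurable.aestronglyMeasurable (by fun_prop)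
    · filter_upwards [self_mem_nhdsWithin] with θ hθ
      exact (ae_nonneg_of_measure_Iio_zero hμ).mono fun x => abs_slope_exp_neg_mul_le hθ
    · refine .of_forall fun x => ?_
      have hderiv : HasDerivAt (fun t => Real.exp (-t * x)) (-x) 0 := by
        simpa using ((hasDerivAt_id (0 : ℝ)).neg.mul_const x).exp
      exact hderiv.tendsto_slope.mono_left (nhdsGT_le_nhdsNE 0)
  refine hslope.congr' ?_
  filter_upwards [self_mem_nhdsWithin] with θ hθ
  simp only [slope_def_field, lapl]
  rw [integral_div, integral_sub (integrable_exp_neg_mul hμ (le_of_lt hθ))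
    (integrable_exp_neg_mul hμ le_rfl)]

end LaplaceTransform

/-- The function `h(z) = λ + β - λz - βR̃(λ - λz)` of a server that fails at rate `β` and has
repair time distribution `R`: a service of length `x`, together with the repairs interrupting it,
sees a number of arrivals with probability generating function `z ↦ exp(-h(z)x)`. -/
noncomputable def completionExponent (lam beta : ℝ) (R : Measure ℝ) (z : ℝ) : ℝ :=
  lam + beta - lam * z - beta * lapl R (lam - lam * z)

/-- The function `δ(z) = S̃(h(z))`, the probability generating function of the number of arrivals
between the start and the completion of a service with distribution `S`, repairs included. -/
noncomputable def completionGF (lam beta : ℝ) (S R : Measure ℝ) (z : ℝ) : ℝ :=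
  lapl S (completionExponent lam beta R z)

section CompletionTime

variable {lam beta : ℝ} {S R : Measure ℝ}

lemma completionExponent_one [IsProbabilityMeasure R] : completionExponent lam beta R 1 = 0 := by
  simp [completionExponent, lapl_zero]

lemma completionGF_one [IsProbabilityMeasure S] [IsProbabilityMeasure R] :
    completionGF lam beta S R 1 = 1 := by
  rw [completionGF, completionExponent_one, lapl_zero]

lemma mapsTo_sub_mul_Iio_Ici (hlam : 0 ≤ lam) :
    MapsTo (fun z => lam - lam * z) (Iio 1) (Ici 0) := fun z (hz : z < 1) => by
  rw [mem_Ici]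
  nlinarith

lemma mapsTo_completionExponent_Iio_Ici [IsProbabilityMeasure R] (hlam : 0 ≤ lam)
    (hbeta : 0 ≤ beta) (hR : R (Iio 0) = 0) :
    MapsTo (completionExponent lam beta R) (Iio 1) (Ici 0) := fun z hz => by
  have harg : 0 ≤ lam - lam * z := mapsTo_sub_mul_Iio_Ici hlam hz
  rw [mem_Ici, completionExponent]
  nlinarith [lapl_le_one hR harg]

lemma hasDerivWithinAt_completionExponent_one [IsFiniteMeasure R] (hlam : 0 ≤ lam)
    (hR : R (Iio 0) = 0) (hintR : Integrable (fun x => x) R) :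
    HasDerivWithinAt (completionExponent lam beta R) (-(lam * (1 + beta * ∫ x, x ∂ R)))
      (Iio 1) 1 := by
  have hlin : HasDerivWithinAt (fun z => lam * z) lam (Iio 1) 1 := by
    simpa using (hasDerivWithinAt_id 1 _).const_mul lam
  have hlapl := (hasDerivWithinAt_lapl_zero hR hintR).comp_of_eq 1 (hlin.const_sub lam)
    (mapsTo_sub_mul_Iio_Ici hlam) (by ring)
  exact ((hlin.const_sub (lam + beta)).sub (hlapl.const_mul beta)).congr_deriv (by ring)

lemma hasDerivWithinAt_completionGF_one [IsFiniteMeasure S] [IsProbabilityMeasure R]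
    (hlam : 0 ≤ lam) (hbeta : 0 ≤ beta) (hS : S (Iio 0) = 0) (hR : R (Iio 0) = 0)
    (hintS : Integrable (fun x => x) S) (hintR : Integrable (fun x => x) R) :
    HasDerivWithinAt (completionGF lam beta S R)
      (lam * (∫ x, x ∂S) * (1 + beta * ∫ x, x ∂ R)) (Iio 1) 1 := by
  have hcomp := (hasDerivWithinAt_lapl_zero hS hintS).comp_of_eq 1
    (hasDerivWithinAt_completionExponent_one hlam hR hintR)
    (mapsTo_completionExponent_Iio_Ici hlam hbeta hR) completionExponent_one.symm
  exact hcomp.congr_deriv (by ring)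

lemma one_add_mul_integral_pos (hbeta : 0 ≤ beta) (hR : R (Iio 0) = 0) :
    0 < 1 + beta * ∫ x, x ∂ R := by
  have hmean := integral_nonneg_of_measure_Iio_zero hR
  positivity

lemma one_add_mul_completion_mean_pos {alpha : ℝ} (halpha : 0 ≤ alpha) (hbeta : 0 ≤ beta)
    (hS : S (Iio 0) = 0) (hR : R (Iio 0) = 0) :
    0 < 1 + alpha * (∫ x, x ∂S) * (1 + beta * ∫ x, x ∂ R) := by
  have hmean := integral_nonneg_of_measure_Iio_zero hS
  have hrepair := one_add_mul_integral_pos hbeta hR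
  positivity

lemma tendsto_one_sub_completionGF_div_completionExponent [IsProbabilityMeasure S]
    [IsProbabilityMeasure R] (hlam : 0 < lam) (hbeta : 0 ≤ beta)
    (hS : S (Iio 0) = 0) (hR : R (Iio 0) = 0)
    (hintS : Integrable (fun x => x) S) (hintR : Integrable (fun x => x) R) :
    Tendsto (fun z => (1 - completionGF lam beta S R z) / completionExponent lam beta R z)
      (𝓝[<] 1) (𝓝 (∫ x, x ∂S)) := by
  have hexponent_pos := mul_pos hlam (one_add_mul_integral_pos hbeta hR)
  convert tendsto_div_nhdsLT_of_hasDerivWithinAt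
    ((hasDerivWithinAt_completionGF_one hlam.le hbeta hS hR hintS hintR).const_sub 1)
    (hasDerivWithinAt_completionExponent_one hlam.le hR hintR)
    (by rw [completionGF_one, sub_self]) completionExponent_one
    (neg_ne_zero.2 hexponent_pos.ne') using 2
  rw [neg_div_neg_eq, eq_div_iff hexponent_pos.ne']
  ring

end CompletionTime

section LimitAtOne

variable {lam alpha nu d1 d2 : ℝ} {δ1 δ2 : ℝ → ℝ}

lemma tendsto_exp_neg_integral_arrival_ratio (hnu : nu ≠ 0) (hd1 : d1 ≠ 1)
    (hδ1 : HasDerivWithinAt δ1 d1 (Iio 1) 1) (hδ2 : HasDerivWithinAt δ2 d2 (Iio 1) 1)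
    (hδ1_one : δ1 1 = 1) (hδ2_one : δ2 1 = 1) :
    Tendsto (fun z => Real.exp (-∫ u in z..1,
      (lam * (1 - δ1 u) + alpha * (1 - δ2 u)) / (nu * (δ1 u - u)))) (𝓝[<] 1) (𝓝 1) :=
  tendsto_exp_neg_integral_div_nhdsLT_one
    (((hδ1.const_sub 1).const_mul lam).add ((hδ2.const_sub 1).const_mul alpha))
    ((hδ1.sub (hasDerivWithinAt_id 1 _)).const_mul nu)
    (by simp [hδ1_one, hδ2_one]) (by simp [hδ1_one])
    (mul_ne_zero hnu (sub_ne_zero.2 hd1))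

lemma tendsto_inbound_ratio (hd1 : d1 ≠ 1)
    (hδ1 : HasDerivWithinAt δ1 d1 (Iio 1) 1) (hδ2 : HasDerivWithinAt δ2 d2 (Iio 1) 1)
    (hδ1_one : δ1 1 = 1) (hδ2_one : δ2 1 = 1) :
    Tendsto (fun z => (lam * (1 - z) + alpha * (1 - δ2 z)) / (δ1 z - z)) (𝓝[<] 1)
      (𝓝 ((lam + alpha * d2) / (1 - d1))) := by
  have hlimit : (lam + alpha * d2) / (1 - d1) = (lam * -1 + alpha * -d2) / (d1 - 1) := by
    rw [← neg_div_neg_eq]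
    ring
  have hid := hasDerivWithinAt_id (1 : ℝ) (Iio 1)
  rw [hlimit]
  exact tendsto_div_nhdsLT_of_hasDerivWithinAt
    (((hid.const_sub 1).const_mul lam).add ((hδ2.const_sub 1).const_mul alpha))
    (hδ1.sub hid) (by simp [hδ2_one]) (by simp [hδ1_one]) (sub_ne_zero.2 hd1)

lemma tendsto_inboundBusyGF {m1 m2 a1 a2 : ℝ} {h1 P0 : ℝ → ℝ} (hcrit : lam * m1 * a1 ≠ 1)
    (hD : 1 + alpha * m2 * a2 ≠ 0)
    (hδ1 : HasDerivWithinAt δ1 (lam * m1 * a1) (Iio 1) 1)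
    (hδ2 : HasDerivWithinAt δ2 (lam * m2 * a2) (Iio 1) 1)
    (hδ1_one : δ1 1 = 1) (hδ2_one : δ2 1 = 1)
    (hratio : Tendsto (fun z => (1 - δ1 z) / h1 z) (𝓝[<] 1) (𝓝 m1))
    (hP0 : Tendsto P0 (𝓝[<] 1) (𝓝 ((1 - lam * m1 * a1) / (1 + alpha * m2 * a2)))) :
    Tendsto (fun z => (lam * (1 - z) + alpha * (1 - δ2 z)) * (1 - δ1 z) /
      ((δ1 z - z) * h1 z) * P0 z) (𝓝[<] 1) (𝓝 (lam * m1)) := by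
  have hcrit' : 1 - lam * m1 * a1 ≠ 0 := sub_ne_zero.2 hcrit.symm
  have hlimit : lam * m1 = (lam + alpha * (lam * m2 * a2)) / (1 - lam * m1 * a1) * m1 *
      ((1 - lam * m1 * a1) / (1 + alpha * m2 * a2)) := by
    field_simp
  rw [hlimit]
  simp only [mul_div_mul_comm]
  exact ((tendsto_inbound_ratio hcrit hδ1 hδ2 hδ1_one hδ2_one).mul hratio).mul hP0

end LimitAtOne

theorem server_failure_frequency_general
    {lam alpha nu beta1 beta2 : ℝ}
    (hlam : 0 < lam) (hnu : nu ≠ 0)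
    (hbeta1 : 0 ≤ beta1) (hbeta2 : 0 ≤ beta2)
    {S1 R1 S2 R2 : Measure ℝ}
    [IsProbabilityMeasure S1] [IsProbabilityMeasure R1]
    [IsProbabilityMeasure S2] [IsProbabilityMeasure R2]
    (hS1 : S1 (Iio 0) = 0) (hR1 : R1 (Iio 0) = 0)
    (hS2 : S2 (Iio 0) = 0) (hR2 : R2 (Iio 0) = 0)
    (hiS1 : Integrable (fun x => x) S1) (hiR1 : Integrable (fun x => x) R1)
    (hiS2 : Integrable (fun x => x) S2) (hiR2 : Integrable (fun x => x) R2)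
    {mu11 gamma11 mu21 gamma21 : ℝ}
    (hmu11 : mu11 = ∫ x, x ∂S1) (hgamma11 : gamma11 = ∫ x, x ∂ R1)
    (hmu21 : mu21 = ∫ x, x ∂S2) (hgamma21 : gamma21 = ∫ x, x ∂ R2)
    {rho sigma : ℝ} (hrho : rho = lam * mu11) (hsigma : sigma = alpha * mu21)
    {h1 h2 δ1 δ2 g φ : ℝ → ℝ}
    (hh1 : ∀ z, h1 z = lam + beta1 - lam * z - beta1 * lapl R1 (lam - lam * z))
    (hh2 : ∀ z, h2 z = lam + beta2 - lam * z - beta2 * lapl R2 (lam - lam * z))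
    (hδ1 : ∀ z, δ1 z = lapl S1 (h1 z)) (hδ2 : ∀ z, δ2 z = lapl S2 (h2 z))
    (hg : ∀ u, g u = (lam * (1 - δ1 u) + alpha * (1 - δ2 u)) / (nu * (δ1 u - u)))
    (hφ : ∀ z, φ z = Real.exp (-(∫ u in z..1, g u)))
    {P0 : ℝ → ℝ}
    (hP0 : ∀ z, P0 z = ((1 - rho * (1 + beta1 * gamma11)) /
      (1 + sigma * (1 + beta2 * gamma21))) * φ z)
    {P1 P2 : ℝ → ℝ}
    (hP1 : ∀ z, P1 z = (lam * (1 - z) + alpha * (1 - δ2 z)) * (1 - δ1 z) /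
      ((δ1 z - z) * h1 z) * P0 z)
    (hP2 : ∀ z, P2 z = alpha * (1 - δ2 z) / h2 z * P0 z)
    (hcrit : rho * (1 + beta1 * gamma11) ≠ 1)
    (hD : 1 + sigma * (1 + beta2 * gamma21) ≠ 0) :
    Tendsto (fun z : ℝ => beta1 * P1 z + beta2 * P2 z) (𝓝[<] 1)
      (𝓝 (rho * beta1 + sigma * beta2 * (1 - rho * (1 + beta1 * gamma11)) /
        (1 + sigma * (1 + beta2 * gamma21)))) := by
  subst hmu11 hgamma11 hmu21 hgamma21 hrho hsigma
  obtain rfl : h1 = completionExponent lam beta1 R1 := funext hh1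
  obtain rfl : h2 = completionExponent lam beta2 R2 := funext hh2
  obtain rfl : δ1 = completionGF lam beta1 S1 R1 := funext hδ1
  obtain rfl : δ2 = completionGF lam beta2 S2 R2 := funext hδ2
  have hδ1' := hasDerivWithinAt_completionGF_one hlam.le hbeta1 hS1 hR1 hiS1 hiR1
  have hδ2' := hasDerivWithinAt_completionGF_one hlam.le hbeta2 hS2 hR2 hiS2 hiR2
  have hratio1 :=
    tendsto_one_sub_completionGF_div_completionExponent hlam hbeta1 hS1 hR1 hiS1 hiR1
  have hratio2 :=
    tendsto_one_sub_completionGF_div_completionExponent hlam hbeta2 hS2 hR2 hiS2 hiR2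
  have hφ_one : Tendsto φ (𝓝[<] 1) (𝓝 1) := by
    simp only [funext hφ, hg]
    exact tendsto_exp_neg_integral_arrival_ratio hnu hcrit hδ1' hδ2' completionGF_one
      completionGF_one
  have hP0_lim := hφ_one.const_mul ((1 - lam * (∫ x, x ∂S1) * (1 + beta1 * ∫ x, x ∂ R1)) /
    (1 + alpha * (∫ x, x ∂S2) * (1 + beta2 * ∫ x, x ∂ R2)))
  simp only [← hP0, mul_one] at hP0_lim
  have hP1_lim := tendsto_inboundBusyGF hcrit hD hδ1' hδ2' completionGF_one completionGF_one
    hratio1 hP0_lim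
  have hP2_lim := (hratio2.const_mul alpha).mul hP0_lim
  simp only [← hP1] at hP1_lim
  simp only [← mul_div_assoc, ← hP2] at hP2_lim
  convert (hP1_lim.const_mul beta1).add (hP2_lim.const_mul beta2) using 2
  ring

/-- steady-state server failure frequency
`P_f = lim_{z→1⁻} (β₁P̃₁(z) + β₂P̃₂(z))
     = ρβ₁ + σβ₂(1 − ρ(1 + β₁γ_{1,1}))/(1 + σ(1 + β₂γ_{2,1}))`. -/
theorem server_failure_frequency
    (lam alpha nu beta1 beta2 : ℝ)
    (hlam : 0 < lam) (halpha : 0 < alpha) (hnu : 0 < nu)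
    (hbeta1 : 0 ≤ beta1) (hbeta2 : 0 ≤ beta2)
    (S1 R1 S2 R2 : Measure ℝ)
    [IsProbabilityMeasure S1] [IsProbabilityMeasure R1]
    [IsProbabilityMeasure S2] [IsProbabilityMeasure R2]
    (hS1 : S1 (Set.Iio 0) = 0) (hR1 : R1 (Set.Iio 0) = 0)
    (hS2 : S2 (Set.Iio 0) = 0) (hR2 : R2 (Set.Iio 0) = 0)
    (hiS1 : Integrable (fun x => x) S1) (hiR1 : Integrable (fun x => x) R1)
    (hiS2 : Integrable (fun x => x) S2) (hiR2 : Integrable (fun x => x) R2)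
    (mu11 gamma11 mu21 gamma21 : ℝ)
    (hmu11 : mu11 = ∫ x, x ∂S1) (hgamma11 : gamma11 = ∫ x, x ∂ R1)
    (hmu21 : mu21 = ∫ x, x ∂S2) (hgamma21 : gamma21 = ∫ x, x ∂ R2)
    (rho sigma : ℝ) (hrho : rho = lam * mu11) (hsigma : sigma = alpha * mu21)
    (h1 h2 δ1 δ2 g φ : ℝ → ℝ)
    (hh1 : ∀ z, h1 z = lam + beta1 - lam * z - beta1 * lapl R1 (lam - lam * z))
    (hh2 : ∀ z, h2 z = lam + beta2 - lam * z - beta2 * lapl R2 (lam - lam * z))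
    (hδ1 : ∀ z, δ1 z = lapl S1 (h1 z)) (hδ2 : ∀ z, δ2 z = lapl S2 (h2 z))
    (hg : ∀ u, g u = (lam * (1 - δ1 u) + alpha * (1 - δ2 u)) / (nu * (δ1 u - u)))
    (hφ : ∀ z, φ z = Real.exp (-(∫ u in z..1, g u)))
    (P0 : ℝ → ℝ)
    (hP0 : ∀ z, P0 z = ((1 - rho * (1 + beta1 * gamma11)) /
      (1 + sigma * (1 + beta2 * gamma21))) * φ z)
    (P1 P2 : ℝ → ℝ)
    (hP1 : ∀ z, P1 z = (lam * (1 - z) + alpha * (1 - δ2 z)) * (1 - δ1 z) /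
      ((δ1 z - z) * h1 z) * P0 z)
    (hP2 : ∀ z, P2 z = alpha * (1 - δ2 z) / h2 z * P0 z)
    (hstab : rho * (1 + beta1 * gamma11) < 1) :
    Filter.Tendsto (fun z : ℝ => beta1 * P1 z + beta2 * P2 z) (nhdsWithin 1 (Set.Iio 1))
      (nhds (rho * beta1 + sigma * beta2 * (1 - rho * (1 + beta1 * gamma11)) /
        (1 + sigma * (1 + beta2 * gamma21)))) := by
  have hD := (one_add_mul_completion_mean_pos halpha.le hbeta2 hS2 hR2).ne'
  rw [← hmu21, ← hgamma21, ← hsigma] at hD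
  exact server_failure_frequency_general hlam hnu.ne' hbeta1 hbeta2 hS1 hR1 hS2 hR2 hiS1 hiR1 hiS2
    hiR2 hmu11 hgamma11 hmu21 hgamma21 hrho hsigma hh1 hh2 hδ1 hδ2 hg hφ hP0 hP1 hP2 hstab.ne hD
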